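/- Let C be a linear [n,k]-code over F_q with parity-check matrix H, let m ≥ 1 and Q = q^m, and let C_Q = C⊗F_Q be the extension of C to F_Q. Then the number of words of C_Q all of whose n coordinates are nonzero equals (−1)^n · Σ_{γ ⊆ {1,…,n}} (−1)^{|γ|} Q^{n_H(γ)}. -/

import Mathlib

/-!
For `γ ⊆ {1,…,n}`, the number of words of `C ⊗ F_Q` supported in `γ` is `Q ^ n_H(γ)`. Over `K` this
is rank–nullity applied to the columns of `H` indexed by `γ` (`card_supported`). It transfers to
`L` by expanding coordinates in a `K`-basis of `L`: a word over `L` is in the extended code iff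
its `[L : K]` coordinate words are in `C` (`mem_extendCode_iff`), so the count over `L` is the
`[L : K]`-th power of the one over `K` (`card_extend_supported`). The theorem is then
inclusion–exclusion over the conditions `w i = 0`, indexed by the complement of `γ`.
-/

open scoped Classical

/-- The nullity of a set `γ` of columns of a matrix `H`: the cardinality of `γ` minus the
rank of the submatrix of `H` consisting of the columns indexed by `γ`, i.e. minus the
dimension of the span of those columns. -/
noncomputable def colNullity {m n K : Type*} [Field K] (H : Matrix m n K)
    (γ : Finset n) : ℕ :=
  γ.card - Module.finrank K ↥(Submodule.span K ((fun j i => H i j) '' (γ : Set n)))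

/-- The extension `C ⊗ F_Q` of a linear code: the `L`-linear span of the image of `C`
under the coordinatewise field embedding `K ↪ L`. -/
noncomputable def extendCode {n : ℕ} {K L : Type*} [Field K] [Field L] [Algebra K L]
    (C : Submodule K (Fin n → K)) : Submodule L (Fin n → L) :=
  Submodule.span L ((fun (c : Fin n → K) (i : Fin n) => algebraMap K L (c i)) ''
    (C : Set (Fin n → K)))

/-- A word over `L` lies in the extended code iff each of its coordinate words with respect to
a `K`-basis of `L` lies in `C`. -/
lemma mem_extendCode_iff {n r : ℕ} {K L ι : Type*} [Field K] [Field L] [Algebra K L] [Fintype ι]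
    (b : Module.Basis ι K L) (C : Submodule K (Fin n → K)) (H : Matrix (Fin r) (Fin n) K)
    (hker : ∀ x : Fin n → K, H.mulVec x = 0 ↔ x ∈ C) (w : Fin n → L) :
    w ∈ extendCode C ↔ ∀ t, (fun i => b.repr (w i) t) ∈ C := by
  constructor
  · intro hw t
    have h1 : extendCode C ≤ LinearMap.ker (H.map (algebraMap K L)).mulVecLin := by
      refine Submodule.span_le.2 ?_
      rintro _ ⟨c, hc, rfl⟩
      have hc' := (hker c).2 hc
      simp only [SetLike.mem_coe, LinearMap.mem_ker, Matrix.mulVecLin_apply]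
      ext i
      have := congrArg (algebraMap K L) (congrFun hc' i)
      simpa [Matrix.mulVec, dotProduct] using this
    have h2 := h1 hw
    rw [LinearMap.mem_ker, Matrix.mulVecLin_apply] at h2
    rw [← hker]
    ext i
    have h3 := congrArg (fun y => b.repr y t) (congrFun h2 i)
    simpa [Matrix.mulVec, dotProduct, ← Algebra.smul_def] using h3
  · intro h
    have hw : w = ∑ t, b t • (fun i => algebraMap K L (b.repr (w i) t)) := by
      ext i
      conv_lhs => rw [← b.sum_repr (w i)]
      simp [Algebra.smul_def, mul_comm]
    rw [hw]
    exact Submodule.sum_mem _ fun t _ =>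
      Submodule.smul_mem _ _ (Submodule.subset_span ⟨_, h t, rfl⟩)

/-- Words of `C` supported in `γ` are the linear relations among the columns of `H` indexed by
`γ`, so rank–nullity counts them. -/
lemma card_supported {n r : ℕ} {K : Type*} [Field K] [Fintype K]
    (C : Submodule K (Fin n → K)) (H : Matrix (Fin r) (Fin n) K)
    (hker : ∀ x : Fin n → K, H.mulVec x = 0 ↔ x ∈ C) (γ : Finset (Fin n)) :
    Nat.card {x : Fin n → K // x ∈ C ∧ ∀ i ∉ γ, x i = 0} =
      Fintype.card K ^ colNullity H γ := by
  let φ : (γ → K) →ₗ[K] (Fin r → K) :=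
    Fintype.linearCombination K (fun j : γ => (fun i => H i j))
  have hφ : Module.finrank K (LinearMap.ker φ) = colNullity H γ := by
    have h1 := φ.finrank_range_add_finrank_ker
    have h2 : LinearMap.range φ =
        Submodule.span K ((fun j i => H i j) '' (γ : Set (Fin n))) := by
      rw [Fintype.range_linearCombination]
      congr 1
      ext v
      simp
    rw [h2] at h1
    simp only [Module.finrank_fintype_fun_eq_card, Fintype.card_coe] at h1
    unfold colNullity
    omega
  have key : ∀ x : Fin n → K, (∀ i ∉ γ, x i = 0) → H.mulVec x = φ (fun j => x j) := by
    intro x hx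
    ext i
    simp only [Matrix.mulVec, dotProduct, φ, Fintype.linearCombination_apply, Finset.sum_apply,
      Pi.smul_apply, smul_eq_mul]
    rw [Finset.sum_coe_sort γ (fun j => x j * H i j)]
    rw [← Finset.sum_subset (Finset.subset_univ γ) (fun j _ hj => by simp [hx j hj])]
    exact Finset.sum_congr rfl fun j _ => mul_comm _ _
  let e : {x : Fin n → K // x ∈ C ∧ ∀ i ∉ γ, x i = 0} ≃ LinearMap.ker φ :=
    { toFun := fun x => ⟨fun j => x.1 j, by
        rw [LinearMap.mem_ker, ← key x.1 x.2.2]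
        exact (hker _).2 x.2.1⟩
      invFun := fun y => ⟨fun i => if h : i ∈ γ then y.1 ⟨i, h⟩ else 0, by
        have h0 : ∀ i ∉ γ, (if h : i ∈ γ then y.1 ⟨i, h⟩ else 0) = 0 :=
          fun i hi => dif_neg hi
        refine ⟨?_, h0⟩
        rw [← hker, key _ h0]
        simp⟩
      left_inv := fun x => by
        ext i
        by_cases h : i ∈ γ
        · simp [h]
        · simp [h, x.2.2 i h]
      right_inv := fun y => by
        ext j
        simp }
  rw [Nat.card_congr e, Module.natCard_eq_pow_finrank (K := K), hφ, Nat.card_eq_fintype_card]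

lemma card_extend_supported {n r : ℕ} {K L : Type*} [Field K] [Fintype K] [Field L] [Fintype L]
    [Algebra K L] (C : Submodule K (Fin n → K)) (H : Matrix (Fin r) (Fin n) K)
    (hker : ∀ x : Fin n → K, H.mulVec x = 0 ↔ x ∈ C) (γ : Finset (Fin n)) :
    Nat.card {w : Fin n → L // w ∈ extendCode C ∧ ∀ i ∉ γ, w i = 0} =
      Fintype.card L ^ colNullity H γ := by
  let b := Module.finBasis K L
  let E : (Fin n → L) ≃ (Fin (Module.finrank K L) → Fin n → K) :=
    (Equiv.piCongrRight fun _ => b.equivFun.toEquiv).trans (Equiv.piComm _)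
  have hE : ∀ w t i, E w t i = b.repr (w i) t := fun w t i => rfl
  have e : {w : Fin n → L // w ∈ extendCode C ∧ ∀ i ∉ γ, w i = 0} ≃
      (Fin (Module.finrank K L) → {x : Fin n → K // x ∈ C ∧ ∀ i ∉ γ, x i = 0}) := by
    refine (E.subtypeEquiv
      (q := fun v => ∀ t, v t ∈ C ∧ ∀ i ∉ γ, v t i = 0) fun w => ?_).trans
      (Equiv.subtypePiEquivPi (p := fun _ x => x ∈ C ∧ ∀ i ∉ γ, x i = 0))
    rw [mem_extendCode_iff b C H hker, forall_and]
    refine and_congr Iff.rfl ?_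
    constructor
    · intro h t i hi
      simp [hE, h i hi]
    · intro h i hi
      apply b.repr.injective
      ext t
      simpa [hE] using h t i hi
  rw [Nat.card_congr e, Nat.card_fun, card_supported C H hker, Nat.card_eq_fintype_card,
    Fintype.card_fin, ← pow_mul, mul_comm, pow_mul, ← Module.card_eq_pow_finrank]

/-- the number of words of the extended code `C ⊗ F_Q` all of whose
coordinates are nonzero equals `(−1)^n · Σ_{γ ⊆ {1,…,n}} (−1)^{|γ|} Q^{n_H(γ)}`. -/
theorem statement4 (q n k m : ℕ) (hm : 1 ≤ m) (hk : k ≤ n)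
    (K L : Type*) [Field K] [Fintype K] [Field L] [Fintype L] [Algebra K L]
    (hq : Fintype.card K = q) (hL : Fintype.card L = q ^ m)
    (C : Submodule K (Fin n → K)) (hdim : Module.finrank K ↥C = k)
    (H : Matrix (Fin (n - k)) (Fin n) K) (hHrank : H.rank = n - k)
    (hker : ∀ x : Fin n → K, H.mulVec x = 0 ↔ x ∈ C) :
    ({w : Fin n → L | w ∈ extendCode C ∧ ∀ i, w i ≠ 0}.ncard : ℤ) =
      (-1) ^ n * ∑ γ : Finset (Fin n),
        (-1) ^ γ.card * ((q : ℤ) ^ m) ^ colNullity H γ := by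
  have hLz : ((q : ℤ) ^ m) = (Fintype.card L : ℤ) := by rw [hL]; push_cast; rfl
  let A := {w : Fin n → L // w ∈ extendCode C}
  let S : Fin n → Finset A := fun i => Finset.univ.filter fun w => w.1 i = 0
  have hIE := Finset.inclusion_exclusion_card_inf_compl (Finset.univ : Finset (Fin n)) S
  have hleft : {w : Fin n → L | w ∈ extendCode C ∧ ∀ i, w i ≠ 0}.ncard =
      (Finset.univ.inf fun i => (S i)ᶜ).card := by
    rw [← Set.ncard_coe_finset, ← Set.ncard_image_of_injective _ Subtype.val_injective]
    congr 1
    ext w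
    simp [S, A, Finset.mem_inf, and_comm]
  have hright : ∀ γ : Finset (Fin n), ((γᶜ).inf S).card = Fintype.card L ^ colNullity H γ := by
    intro γ
    rw [← card_extend_supported C H hker γ, ← Set.ncard_coe_finset,
      ← Set.ncard_image_of_injective _ Subtype.val_injective]
    change _ = {w : Fin n → L | w ∈ extendCode C ∧ ∀ i ∉ γ, w i = 0}.ncard
    congr 1
    ext w
    simp [S, A, Finset.mem_inf, and_comm]
  rw [hleft, hIE, hLz, Finset.powerset_univ, Finset.mul_sum]
  refine (Equiv.sum_comp (compl_involutive (α := Finset (Fin n))).toPerm _).symm.trans ?_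
  refine Finset.sum_congr rfl fun γ _ => ?_
  simp only [Function.Involutive.coe_toPerm]
  rw [hright γ, ← mul_assoc]
  push_cast
  congr 1
  -- `n = |γ| + |γᶜ|`, so `(-1)^n (-1)^|γ| = (-1)^|γᶜ|`.
  have hc : n = γ.card + (γᶜ).card := by simpa using (Finset.card_add_card_compl γ).symm
  have h2 : ((-1 : ℤ) ^ γ.card) * (-1) ^ γ.card = 1 := by rw [← mul_pow]; simp
  calc (-1 : ℤ) ^ (γᶜ).card = ((-1) ^ γ.card * (-1) ^ γ.card) * (-1) ^ (γᶜ).card := by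
        rw [h2, one_mul]
    _ = (-1) ^ (γ.card + (γᶜ).card) * (-1) ^ γ.card := by rw [pow_add]; ring
    _ = (-1) ^ n * (-1) ^ γ.card := by rw [← hc]
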